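/- arXiv:2203.15164 — 6 statements merged into one kernel-verified Lean document; each statement's English description precedes it below -/
import Mathlib

section
/- Let λ₁ > λ₂ > … > λ_n be real numbers, let ε_Λ = ε + diag(λ₁,…,λ_n), and let X be an n×n real lower Hessenberg matrix whose characteristic polynomial equals ∏_{i=1}^{n} (x − λ_i). Then there exists a unique lower unipotent matrix L ∈ N₋ such that X = L⁻¹ · ε_Λ · L. -/
/-!
Multiplying by `L`, the equation `X = L⁻¹ ε_Λ L` becomes `L X = ε_Λ L`, which says that the rows
`r_k` of `L` satisfy `r_{k+1} = r_k (X - λ_k)`, where the row after the last one is read as `0`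
(`epsMat_mul_apply`).

A lower unipotent `L` has first row `e₀`, so the recursion determines every other row; this is
uniqueness. For existence, put `r_k = e₀ ∏_{i<k} (X - λ_i)` (`krylovRow`). Since `X` is lower
Hessenberg, multiplying by `X - λ_k` moves the leading `1` of a row one place to the right, so
these rows form a lower unipotent matrix (`krylovRow_shape`), and the closing condition `r_n = 0`
is the Cayley–Hamilton theorem (`krylovRow_last`).
-/

open Matrix

/-- A lower Hessenberg matrix: superdiagonal entries are `1`, entries above the
superdiagonal vanish. -/
def IsLowerHessenberg {n : ℕ} (M : Matrix (Fin n) (Fin n) ℝ) : Prop :=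
  (∀ i j : Fin n, (j : ℕ) = (i : ℕ) + 1 → M i j = 1) ∧
  (∀ i j : Fin n, (i : ℕ) + 1 < (j : ℕ) → M i j = 0)

/-- Lower unipotent matrices (members of `N₋`). -/
def IsLowerUnipotent {n : ℕ} (M : Matrix (Fin n) (Fin n) ℝ) : Prop :=
  (∀ i, M i i = 1) ∧ ∀ i j : Fin n, i < j → M i j = 0

/-- `ε`: ones on the superdiagonal, zeros elsewhere. -/
def epsMat (n : ℕ) : Matrix (Fin n) (Fin n) ℝ :=
  fun p q => if (p : ℕ) + 1 = (q : ℕ) then 1 else 0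

lemma IsLowerUnipotent.isUnit_det {n : ℕ} {L : Matrix (Fin n) (Fin n) ℝ}
    (hL : IsLowerUnipotent L) : IsUnit L.det := by
  have hd : L.det = ∏ i, L i i := det_of_isLowerTriangular L (fun i j hij => hL.2 i j hij)
  rw [hd]
  simp [hL.1]

/-- Left multiplication by `ε` shifts the rows up by one and puts a zero row at the bottom. -/
lemma epsMat_mul_apply {n : ℕ} (M : Matrix (Fin n) (Fin n) ℝ) (i j : Fin n) :
    (epsMat n * M) i j = if h : (i : ℕ) + 1 < n then M ⟨i + 1, h⟩ j else 0 := by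
  rw [Matrix.mul_apply]
  split_ifs with h
  · rw [Finset.sum_eq_single (⟨i + 1, h⟩ : Fin n)]
    · simp [epsMat]
    · intro q _ hq
      have : (i : ℕ) + 1 ≠ q := fun e => hq (Fin.ext e.symm)
      simp [epsMat, this]
    · simp
  · refine Finset.sum_eq_zero fun q _ => ?_
    have : (i : ℕ) + 1 ≠ q := by omega
    simp [epsMat, this]

lemma epsLam_mul_apply {n : ℕ} (lam : Fin n → ℝ) (M : Matrix (Fin n) (Fin n) ℝ) (i j : Fin n) :
    ((epsMat n + Matrix.diagonal lam) * M) i j =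
      (if h : (i : ℕ) + 1 < n then M ⟨i + 1, h⟩ j else 0) + lam i * M i j := by
  rw [Matrix.add_mul, Matrix.add_apply, epsMat_mul_apply, Matrix.diagonal_mul]

lemma eq_conj_iff {n : ℕ} {L X E : Matrix (Fin n) (Fin n) ℝ} (hL : IsUnit L.det) :
    X = L⁻¹ * E * L ↔ L * X = E * L := by
  constructor
  · rintro rfl
    rw [Matrix.mul_assoc, Matrix.mul_nonsing_inv_cancel_left _ _ hL]
  · intro h
    rw [Matrix.mul_assoc, ← h, Matrix.nonsing_inv_mul_cancel_left _ _ hL]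

/-- The sequence `λ` indexed by `ℕ`, extended by `0` beyond `n`. -/
noncomputable def lamExt {n : ℕ} (lam : Fin n → ℝ) (k : ℕ) : ℝ :=
  if h : k < n then lam ⟨k, h⟩ else 0

/-- The row vector `e₀ ∏_{i<k} (X - λ_i)`. -/
noncomputable def krylovRow {n : ℕ} (lam : Fin n → ℝ) (X : Matrix (Fin n) (Fin n) ℝ) (k : ℕ) :
    Fin n → ℝ :=
  (fun j : Fin n => if (j : ℕ) = 0 then 1 else 0) ᵥ* Polynomial.aeval X
    (∏ i ∈ Finset.range k, (Polynomial.X - Polynomial.C (lamExt lam i)))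

lemma krylovRow_zero {n : ℕ} (lam : Fin n → ℝ) (X : Matrix (Fin n) (Fin n) ℝ) (j : Fin n) :
    krylovRow lam X 0 j = if (j : ℕ) = 0 then 1 else 0 := by
  simp [krylovRow]

lemma krylovRow_succ {n : ℕ} (lam : Fin n → ℝ) (X : Matrix (Fin n) (Fin n) ℝ) (k : ℕ)
    (j : Fin n) :
    krylovRow lam X (k + 1) j =
      ∑ i, krylovRow lam X k i * X i j - lamExt lam k * krylovRow lam X k j := by
  have h : krylovRow lam X (k + 1) =
      krylovRow lam X k ᵥ* X - lamExt lam k • krylovRow lam X k := by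
    unfold krylovRow
    rw [Finset.prod_range_succ, map_mul, ← Matrix.vecMul_vecMul, map_sub, Polynomial.aeval_X,
      Polynomial.aeval_C, Matrix.vecMul_sub, Algebra.algebraMap_eq_smul_one, Matrix.vecMul_smul,
      Matrix.vecMul_one]
  rw [h]
  simp [Matrix.vecMul, dotProduct]

/-- Cayley–Hamilton closes the recursion. -/
lemma krylovRow_last {n : ℕ} (lam : Fin n → ℝ) (X : Matrix (Fin n) (Fin n) ℝ)
    (hchar : X.charpoly = ∏ i : Fin n, (Polynomial.X - Polynomial.C (lam i))) (j : Fin n) :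
    krylovRow lam X n j = 0 := by
  have h : ∏ i ∈ Finset.range n, (Polynomial.X - Polynomial.C (lamExt lam i)) = X.charpoly := by
    rw [hchar, Finset.prod_range]
    simp [lamExt]
  rw [krylovRow, h, Matrix.aeval_self_charpoly, Matrix.vecMul_zero, Pi.zero_apply]

/-- The `k`-th row has a `1` in position `k` and zeros to the right of it. -/
lemma krylovRow_shape {n : ℕ} (lam : Fin n → ℝ) (X : Matrix (Fin n) (Fin n) ℝ)
    (hX : IsLowerHessenberg X) (k : ℕ) :
    (∀ j : Fin n, (j : ℕ) = k → krylovRow lam X k j = 1) ∧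
      ∀ j : Fin n, k < j → krylovRow lam X k j = 0 := by
  induction k with
  | zero =>
    refine ⟨fun j hj => by simp [krylovRow_zero, hj], fun j hj => ?_⟩
    rw [krylovRow_zero, if_neg (by omega)]
  | succ k ih =>
    obtain ⟨ih1, ih0⟩ := ih
    refine ⟨fun j hj => ?_, fun j hj => ?_⟩
    · rw [krylovRow_succ, ih0 j (by omega), mul_zero, sub_zero,
        Finset.sum_eq_single (⟨k, by omega⟩ : Fin n)]
      · rw [ih1 _ rfl, hX.1 _ j hj, mul_one]
      · intro i _ hi
        have hik : (i : ℕ) ≠ k := fun e => hi (Fin.ext e)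
        rcases lt_or_gt_of_ne hik with h | h
        · rw [hX.2 i j (by omega), mul_zero]
        · rw [ih0 i h, zero_mul]
      · simp
    · rw [krylovRow_succ, ih0 j (by omega), mul_zero, sub_zero]
      refine Finset.sum_eq_zero fun i _ => ?_
      rcases le_or_gt (i : ℕ) k with h | h
      · rw [hX.2 i j (by omega), mul_zero]
      · rw [ih0 i h, zero_mul]

/-- The first row and the recursion determine a lower unipotent solution. -/
lemma eq_krylovRow {n : ℕ} (lam : Fin n → ℝ) (X L : Matrix (Fin n) (Fin n) ℝ)
    (hL : IsLowerUnipotent L) (h : L * X = (epsMat n + Matrix.diagonal lam) * L) (k : ℕ)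
    (hk : k < n) : ∀ j, L ⟨k, hk⟩ j = krylovRow lam X k j := by
  induction k with
  | zero =>
    intro j
    rw [krylovRow_zero]
    split_ifs with hj
    · have : j = ⟨0, hk⟩ := Fin.ext hj
      rw [this, hL.1]
    · exact hL.2 _ _ (Fin.lt_def.2 (Nat.pos_of_ne_zero hj))
  | succ k ih =>
    intro j
    have hk' : k < n := by omega
    have e := congrFun (congrFun h ⟨k, hk'⟩) j
    rw [epsLam_mul_apply, dif_pos hk, Matrix.mul_apply] at e
    simp only [ih hk'] at e
    rw [krylovRow_succ, lamExt, dif_pos hk']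
    linarith

/-- Kostant: every lower Hessenberg matrix with characteristic
polynomial `∏ (x − λᵢ)`, where `λ₁ > ⋯ > λ_n`, is conjugate to `ε_Λ = ε + diag(λ)`
by a unique lower unipotent matrix. -/
theorem statement12 (n : ℕ) (lam : Fin n → ℝ)
    (hlam : ∀ i j : Fin n, i < j → lam j < lam i)
    (X : Matrix (Fin n) (Fin n) ℝ) (hX : IsLowerHessenberg X)
    (hchar : X.charpoly = ∏ i : Fin n, (Polynomial.X - Polynomial.C (lam i))) :
    ∃! L : Matrix (Fin n) (Fin n) ℝ,
      IsLowerUnipotent L ∧ X = L⁻¹ * (epsMat n + Matrix.diagonal lam) * L := by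
  have hL : IsLowerUnipotent (Matrix.of fun i j : Fin n => krylovRow lam X i j) :=
    ⟨fun i => (krylovRow_shape lam X hX i).1 i rfl,
      fun i j hij => (krylovRow_shape lam X hX i).2 j hij⟩
  refine ⟨Matrix.of fun i j : Fin n => krylovRow lam X i j,
    ⟨hL, (eq_conj_iff hL.isUnit_det).2 ?_⟩, ?_⟩
  · ext i j
    have e := krylovRow_succ lam X i j
    rw [lamExt, dif_pos i.2] at e
    rw [epsLam_mul_apply, Matrix.mul_apply]
    simp only [Matrix.of_apply]
    split_ifs with hi
    · linarith
    -- here `i` is the last index, so the next row is the `n`-th one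
    · have hn : (i : ℕ) + 1 = n := by omega
      rw [hn, krylovRow_last lam X hchar] at e
      linarith
  · rintro M ⟨hM, hMX⟩
    ext i j
    exact eq_krylovRow lam X M hM ((eq_conj_iff hM.isUnit_det).1 hMX) i i.2 j
end

section
/- Let λ₁ > λ₂ > … > λ_n be real numbers, ε_Λ = ε + diag(λ₁,…,λ_n), let L₀ ∈ N₋, and set X(0) := L₀⁻¹·ε_Λ·L₀ (a lower Hessenberg matrix). Assume that for every t ∈ ℕ all leading principal minors of ε_Λ^t·L₀ are nonzero, and set L_t := Π₋(ε_Λ^t·L₀). Assume further that the discrete full Kostant–Toda iterates are defined: for each t ∈ ℕ, X(t) admits an LU factorization X(t) = L(t)·R(t) with L(t) ∈ N₋, R(t) ∈ B₊, and X(t+1) := L(t)⁻¹·X(t)·L(t). Then for every t ∈ ℕ one has L(t) = L_t⁻¹ · L_{t+1}. -/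
/-!
Put `P_t = L₀ L(0) ⋯ L(t-1)`, a lower unipotent matrix. Since each step of the recursion conjugates
by `L(t)`, one has `ε_Λ P_t = P_t X(t)`. If `ε_Λ ^ t L₀ = P_t S_t` with `S_t ∈ B₊`, then
`ε_Λ ^ (t+1) L₀ = P_t X(t) S_t = (P_t L(t)) (R(t) S_t)`, so by induction `P_t` is the lower unipotent
factor of `ε_Λ ^ t L₀` for every `t`. Uniqueness of the LU factorization (`lower_factor_unique`,
`PiMinus_eq`) gives `Π₋(ε_Λ ^ t L₀) = P_t`, and `P_t⁻¹ P_{t+1} = L(t)`.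
-/

open Matrix
open scoped Classical

/-- Invertible upper triangular matrices (members of `B₊`). -/
def IsUpperTriReg {n : ℕ} (M : Matrix (Fin n) (Fin n) ℝ) : Prop :=
  (∀ i j : Fin n, j < i → M i j = 0) ∧ IsUnit M.det

/-- The lower unipotent factor `Π₋(g)` of the LU factorization `g = Π₋(g)·Π₊(g)`,
when such a factorization exists (it is then unique). -/
noncomputable def PiMinus {n : ℕ} (g : Matrix (Fin n) (Fin n) ℝ) :
    Matrix (Fin n) (Fin n) ℝ :=
  if h : ∃ p : Matrix (Fin n) (Fin n) ℝ × Matrix (Fin n) (Fin n) ℝ,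
      IsLowerUnipotent p.1 ∧ IsUpperTriReg p.2 ∧ g = p.1 * p.2 then h.choose.1 else 1

/-- The `k`-th leading principal minor of `M` (`= 1` for `k = 0`; junk value `0` for `k > n`). -/
noncomputable def leadMinor {n : ℕ} (M : Matrix (Fin n) (Fin n) ℝ) (k : ℕ) : ℝ :=
  if h : k ≤ n then (M.submatrix (Fin.castLE h) (Fin.castLE h)).det else 0

lemma IsLowerUnipotent.blockTriangular {n : ℕ} {M : Matrix (Fin n) (Fin n) ℝ}
    (h : IsLowerUnipotent M) : M.BlockTriangular OrderDual.toDual :=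
  fun i j hij => h.2 i j hij

lemma IsUpperTriReg.blockTriangular {n : ℕ} {M : Matrix (Fin n) (Fin n) ℝ}
    (h : IsUpperTriReg M) : M.BlockTriangular id :=
  fun i j hij => h.1 i j hij

lemma IsLowerUnipotent.isUnit_det_s13 {n : ℕ} {M : Matrix (Fin n) (Fin n) ℝ}
    (h : IsLowerUnipotent M) : IsUnit M.det := by
  rw [Matrix.det_of_isLowerTriangular M h.blockTriangular]
  simp [h.1]

/-- The diagonal of a product with a lower unipotent left factor and a lower triangular right
factor is the diagonal of the right factor. -/
lemma IsLowerUnipotent.mul_apply_diag {n : ℕ} {M N : Matrix (Fin n) (Fin n) ℝ}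
    (hM : IsLowerUnipotent M) (hN : ∀ i j : Fin n, i < j → N i j = 0) (i : Fin n) :
    (M * N) i i = N i i := by
  rw [Matrix.mul_apply, Finset.sum_eq_single i, hM.1, one_mul]
  · intro k _ hk
    rcases lt_or_gt_of_ne hk with h | h
    · rw [hN k i h, mul_zero]
    · rw [hM.2 i k h, zero_mul]
  · simp

lemma IsLowerUnipotent.mul {n : ℕ} {M N : Matrix (Fin n) (Fin n) ℝ}
    (hM : IsLowerUnipotent M) (hN : IsLowerUnipotent N) : IsLowerUnipotent (M * N) :=
  ⟨fun i => (hM.mul_apply_diag hN.2 i).trans (hN.1 i),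
    fun _ _ hij => (hM.blockTriangular.mul hN.blockTriangular) hij⟩

lemma IsUpperTriReg.mul {n : ℕ} {M N : Matrix (Fin n) (Fin n) ℝ}
    (hM : IsUpperTriReg M) (hN : IsUpperTriReg N) : IsUpperTriReg (M * N) :=
  ⟨fun _ _ hij => (hM.blockTriangular.mul hN.blockTriangular) hij,
    by rw [Matrix.det_mul]; exact hM.2.mul hN.2⟩

lemma IsUpperTriReg.one {n : ℕ} : IsUpperTriReg (1 : Matrix (Fin n) (Fin n) ℝ) :=
  ⟨fun _ _ hij => Matrix.one_apply_ne hij.ne', by simp⟩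

/-- The lower factor of an LU factorization is unique: `L'⁻¹ L = R' R⁻¹` is both lower and upper
triangular, and its diagonal is that of `L`, so it is the identity. -/
lemma lower_factor_unique {n : ℕ} {L R L' R' : Matrix (Fin n) (Fin n) ℝ}
    (hL : IsLowerUnipotent L) (hR : IsUpperTriReg R)
    (hL' : IsLowerUnipotent L') (hR' : IsUpperTriReg R')
    (h : L * R = L' * R') : L = L' := by
  letI := Matrix.invertibleOfIsUnitDet _ hL'.isUnit_det_s13
  letI := Matrix.invertibleOfIsUnitDet _ hR.2
  have hlow : (L'⁻¹ * L).BlockTriangular OrderDual.toDual :=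
    (Matrix.blockTriangular_inv_of_blockTriangular hL'.blockTriangular).mul hL.blockTriangular
  have hup : (R' * R⁻¹).BlockTriangular id :=
    hR'.blockTriangular.mul (Matrix.blockTriangular_inv_of_blockTriangular hR.blockTriangular)
  have heq : L'⁻¹ * L = R' * R⁻¹ := by
    calc L'⁻¹ * L = L'⁻¹ * (L * R * R⁻¹) := by
          rw [Matrix.mul_nonsing_inv_cancel_right _ _ hR.2]
      _ = R' * R⁻¹ := by
          rw [h, Matrix.mul_assoc, Matrix.nonsing_inv_mul_cancel_left _ _ hL'.isUnit_det_s13]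
  have hLD : L' * (L'⁻¹ * L) = L := Matrix.mul_nonsing_inv_cancel_left _ _ hL'.isUnit_det_s13
  have hone : L'⁻¹ * L = 1 := by
    ext i j
    rcases lt_trichotomy i j with hij | rfl | hij
    · rw [Matrix.one_apply_ne hij.ne]
      exact hlow hij
    · rw [Matrix.one_apply_eq, ← hL'.mul_apply_diag (fun a b hab => hlow hab) i, hLD, hL.1]
    · rw [Matrix.one_apply_ne hij.ne', heq]
      exact hup hij
  rw [← hLD, hone, Matrix.mul_one]

lemma PiMinus_eq {n : ℕ} {g L R : Matrix (Fin n) (Fin n) ℝ}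
    (hL : IsLowerUnipotent L) (hR : IsUpperTriReg R) (h : g = L * R) : PiMinus g = L := by
  have hex : ∃ p : Matrix (Fin n) (Fin n) ℝ × Matrix (Fin n) (Fin n) ℝ,
      IsLowerUnipotent p.1 ∧ IsUpperTriReg p.2 ∧ g = p.1 * p.2 := ⟨(L, R), hL, hR, h⟩
  rw [PiMinus, dif_pos hex]
  obtain ⟨h1, h2, h3⟩ := hex.choose_spec
  exact lower_factor_unique h1 h2 hL hR (h3.symm.trans h)

/-- the Symes orbit is a discrete logarithmic derivative of the linear
semigroup flow under the principal embedding: `L(t) = L_t⁻¹ · L_{t+1}`, where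
`L_t = Π₋(ε_Λ^t · L₀)`. -/
theorem statement13 (n : ℕ) (lam : Fin n → ℝ)
    (hlam : ∀ i j : Fin n, i < j → lam j < lam i)
    (L₀ : Matrix (Fin n) (Fin n) ℝ) (hL₀ : IsLowerUnipotent L₀)
    (hminors : ∀ t : ℕ, ∀ k, 1 ≤ k → k ≤ n →
      leadMinor ((epsMat n + Matrix.diagonal lam) ^ t * L₀) k ≠ 0)
    (X Lf Rf : ℕ → Matrix (Fin n) (Fin n) ℝ)
    (hX0 : X 0 = L₀⁻¹ * (epsMat n + Matrix.diagonal lam) * L₀)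
    (hLU : ∀ t : ℕ, IsLowerUnipotent (Lf t) ∧ IsUpperTriReg (Rf t) ∧ X t = Lf t * Rf t)
    (hrec : ∀ t : ℕ, X (t + 1) = (Lf t)⁻¹ * X t * Lf t) :
    ∀ t : ℕ, Lf t =
      (PiMinus ((epsMat n + Matrix.diagonal lam) ^ t * L₀))⁻¹ *
        PiMinus ((epsMat n + Matrix.diagonal lam) ^ (t + 1) * L₀) := by
  intro t
  set E := epsMat n + Matrix.diagonal lam with hE
  -- `P = L₀ L(0) ⋯ L(t-1)` conjugates `ε_Λ` to `X t` and is the lower factor of `ε_Λ ^ t L₀`.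
  have key : ∀ t : ℕ, ∃ P S : Matrix (Fin n) (Fin n) ℝ, IsLowerUnipotent P ∧ IsUpperTriReg S ∧
      E ^ t * L₀ = P * S ∧ E * P = P * X t := by
    intro t
    induction t with
    | zero =>
      refine ⟨L₀, 1, hL₀, IsUpperTriReg.one, by simp, ?_⟩
      rw [hX0, Matrix.mul_assoc, Matrix.mul_nonsing_inv_cancel_left _ _ hL₀.isUnit_det_s13]
    | succ t ih =>
      obtain ⟨P, S, hP, hS, hPS, hEP⟩ := ih
      obtain ⟨hL, hR, hX⟩ := hLU t
      refine ⟨P * Lf t, Rf t * S, hP.mul hL, hR.mul hS, ?_, ?_⟩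
      · rw [pow_succ', Matrix.mul_assoc, hPS, ← Matrix.mul_assoc, hEP, hX]
        simp only [Matrix.mul_assoc]
      · rw [hrec, ← Matrix.mul_assoc, hEP, Matrix.mul_assoc, Matrix.mul_assoc, Matrix.mul_assoc,
          Matrix.mul_nonsing_inv_cancel_left _ _ hL.isUnit_det_s13]
  obtain ⟨P, S, hP, hS, hPS, hEP⟩ := key t
  obtain ⟨hL, hR, hX⟩ := hLU t
  have hnext : E ^ (t + 1) * L₀ = P * Lf t * (Rf t * S) := by
    rw [pow_succ', Matrix.mul_assoc, hPS, ← Matrix.mul_assoc, hEP, hX]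
    simp only [Matrix.mul_assoc]
  rw [PiMinus_eq hP hS hPS, PiMinus_eq (hP.mul hL) (hR.mul hS) hnext,
    Matrix.nonsing_inv_mul_cancel_left _ _ hP.isUnit_det_s13]
end

section
/- Let λ₁, …, λ_n be pairwise distinct real numbers, let ε_Λ = ε + diag(λ₁,…,λ_n) and D_Λ = diag(λ₁,…,λ_n). Define the upper triangular matrix U by U_{i,j} = ∏_{k=1}^{i−1} (λ_j − λ_k) for 1 ≤ i ≤ j ≤ n and U_{i,j} = 0 for i > j. Then U is invertible and ε_Λ = U · D_Λ · U⁻¹ (equivalently, ε_Λ · U = U · D_Λ). -/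
/-!
For every `m`, let `P m q = ∏_{k < m} (λ_q - λ_k)`. This product contains the factor
`λ_q - λ_q` as soon as `q < m`, so `U p q = P p q` for all `p`, `q`, the case `p > q` included.
Multiplying by `ε` on the left shifts rows up by one, hence `(ε U) p q = P (p + 1) q`; in the last
row this still holds because `P n q = 0`. Now `ε_Λ U = U D_Λ` is the recursion
`P (p + 1) q = P p q * (λ_q - λ_p)`. Finally `U` is upper triangular, and its diagonal
entries are products of differences of distinct values `λ_k`, so `det U ≠ 0`.
-/

open Matrix

/-- The product `∏_{k < m} (λ_q - λ_k)`, with `m` allowed to be any natural number so that the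
row index `n` just past the matrix makes sense. -/
def newtonProd {n : ℕ} (lam : Fin n → ℝ) (m : ℕ) (q : Fin n) : ℝ :=
  ∏ k : Fin n, (if (k : ℕ) < m then lam q - lam k else 1)

lemma newtonProd_eq_zero {n : ℕ} (lam : Fin n → ℝ) {m : ℕ} {q : Fin n} (h : (q : ℕ) < m) :
    newtonProd lam m q = 0 :=
  Finset.prod_eq_zero (Finset.mem_univ q) (by simp [h])

lemma newtonProd_succ {n : ℕ} (lam : Fin n → ℝ) (p q : Fin n) :
    newtonProd lam ((p : ℕ) + 1) q = newtonProd lam p q * (lam q - lam p) := by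
  have hp : lam q - lam p = ∏ k : Fin n, (if k = p then lam q - lam k else 1) := by
    simp
  rw [hp, newtonProd, newtonProd, ← Finset.prod_mul_distrib]
  refine Finset.prod_congr rfl fun k _ => ?_
  rcases lt_trichotomy (k : ℕ) (p : ℕ) with h | h | h
  · have : k ≠ p := fun e => by simp [e] at h
    simp [this, h, Nat.lt_succ_of_lt h]
  · have : k = p := Fin.ext h
    simp [this]
  · have h1 : k ≠ p := fun e => by simp [e] at h
    have h2 : ¬ (k : ℕ) < (p : ℕ) + 1 := by omega
    have h3 : ¬ (k : ℕ) < (p : ℕ) := by omega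
    simp only [h1, h2, h3, if_false, mul_one]

/-- Left multiplication by `ε` shifts rows up; the hypothesis `hV` says that the row entering
at the bottom is zero. -/
lemma epsMat_mul_apply_s14 {n : ℕ} (V : ℕ → Fin n → ℝ) (hV : ∀ q, V n q = 0) (p q : Fin n) :
    (epsMat n * Matrix.of fun i j : Fin n => V i j) p q = V ((p : ℕ) + 1) q := by
  simp only [Matrix.mul_apply, epsMat, Matrix.of_apply, ite_mul, one_mul, zero_mul]
  by_cases h : (p : ℕ) + 1 < n
  · rw [Finset.sum_eq_single (⟨(p : ℕ) + 1, h⟩ : Fin n)]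
    · simp
    · intro b _ hb
      exact if_neg fun e => hb (Fin.ext e.symm)
    · simp
  · have hn : (p : ℕ) + 1 = n := by omega
    rw [hn, hV]
    exact Finset.sum_eq_zero fun b _ => if_neg (by omega)

/-- explicit diagonalization of `ε_Λ = ε + diag(λ)` for pairwise
distinct `λᵢ`, by the upper triangular matrix `U` with
`U_{i,j} = ∏_{k=1}^{i−1}(λ_j − λ_k)` for `i ≤ j`. -/
theorem statement14 (n : ℕ) (lam : Fin n → ℝ) (hlam : Function.Injective lam)
    (U : Matrix (Fin n) (Fin n) ℝ)
    (hU : ∀ p q : Fin n, U p q =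
      if (p : ℕ) ≤ (q : ℕ) then
        ∏ k : Fin n, (if (k : ℕ) < (p : ℕ) then lam q - lam k else 1)
      else 0) :
    IsUnit U.det ∧
    (epsMat n + Matrix.diagonal lam) * U = U * Matrix.diagonal lam ∧
    epsMat n + Matrix.diagonal lam = U * Matrix.diagonal lam * U⁻¹ := by
  have hUP : U = Matrix.of fun p q : Fin n => newtonProd lam p q := by
    ext p q
    rw [hU, Matrix.of_apply]
    split_ifs with h
    · rfl
    · exact (newtonProd_eq_zero lam (not_le.mp h)).symm
  have hdet : IsUnit U.det := by
    have htri : U.BlockTriangular id := fun p q hpq => by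
      have hlt : (q : ℕ) < (p : ℕ) := hpq
      rw [hU, if_neg (not_le.mpr hlt)]
    rw [isUnit_iff_ne_zero, Matrix.det_of_isUpperTriangular htri]
    refine Finset.prod_ne_zero_iff.mpr fun p _ => ?_
    rw [hU, if_pos le_rfl]
    refine Finset.prod_ne_zero_iff.mpr fun k _ => ?_
    split_ifs with hk
    · exact sub_ne_zero.mpr fun e => hk.ne (congrArg Fin.val (hlam e).symm)
    · exact one_ne_zero
  have hcomm : (epsMat n + Matrix.diagonal lam) * U = U * Matrix.diagonal lam := by
    ext p q
    rw [add_mul, Matrix.add_apply, Matrix.diagonal_mul, Matrix.mul_diagonal, hUP,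
      epsMat_mul_apply_s14 (newtonProd lam) (fun q => newtonProd_eq_zero lam q.isLt),
      newtonProd_succ, Matrix.of_apply]
    ring
  refine ⟨hdet, hcomm, ?_⟩
  rw [← hcomm, Matrix.mul_nonsing_inv_cancel_right _ _ hdet]
end

section
/- Let n ≥ 2, λ₁,…,λ_n ∈ ℝ, ε_Λ = ε + diag(λ₁,…,λ_n), and let I ⊆ ℝ be an open interval. Let u_i^j : I → ℝ_{>0} (1 ≤ i ≤ j ≤ n−1) be differentiable, set T_j(s) := T_j(u(s)), and let R^{(1)}(s), …, R^{(n−1)}(s) be upper bidiagonal matrices with ones on the superdiagonal depending on s, with R^{(0)}(s) ≡ ε_Λ; extend the coordinates by u_i^j := 0 whenever the indices do not satisfy 1 ≤ i ≤ j ≤ n−1. Then the following are equivalent on I: (a) for all 1 ≤ j ≤ n−1, dT_j/ds = T_j·π₋(T_j⁻¹·R^{(j−1)}·T_j) and R^{(j)} = π₊(T_j⁻¹·R^{(j−1)}·T_j); (b) for all 1 ≤ j ≤ n−1, dT_j/ds = [T_j, T_j·ε − R^{(j−1)}] and R^{(j)} = ε_Λ + [ε, Σ_{i=1}^{j} T_i];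 (c) for all 1 ≤ j ≤ n−1: (d/ds u_i^{j+i−1})/u_i^{j+i−1} = R^{(j−1)}_{i+1,i+1} − R^{(j−1)}_{i,i} + u_{i−1}^{j+i−2} − u_i^{j+i−1} for 1 ≤ i ≤ n−j, and R^{(j)}_{i,i} = R^{(j−1)}_{i,i} + u_i^{j+i−1} − u_{i−1}^{j+i−2} for 1 ≤ i ≤ n. -/
/-!
Each `T_j` is a product of elementary matrices in *increasing* order, so all mixed products vanish
and `T_j = 1 + A`, with `A` supported on the first subdiagonal (`Tmat_eq`).  Write
`R^{(j-1)} = ε + D` with `D` diagonal.  Then `Δ = [ε, T_j] = [ε, A]` is diagonal (`comm_eps_lowB`)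
and `F = [T_j, T_j ε - R^{(j-1)}] = [D, A] - A Δ` is again supported on the first subdiagonal, with
exactly the entries on the right-hand side of the coordinate equations (`flow_eq`).

Moreover `T⁻¹ R T = T⁻¹ F + (R + Δ)` holds identically, where `T⁻¹ F` is strictly lower triangular
and `R + Δ` is upper triangular; hence `π₋(T⁻¹ R T) = T⁻¹ F` and `π₊(T⁻¹ R T) = R + Δ`
(`conj_parts`).  So the three differential equations agree termwise, and the three conditions on
the `R^{(j)}` all say `R^{(j)} = R^{(j-1)} + [ε, T_j]`; in the commutator form this recursion is
summed up (`telescope_iff`), in the coordinate form it is read off on the diagonal.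
-/


open Matrix

/-- `ℓ_{k+1}(a)` (paper's 1-indexed `ℓ_i` with `i = k+1`): the identity matrix with
the entry `a` inserted in (0-indexed) position `(k+1, k)`. -/
def elemL (n : ℕ) (k : ℕ) (a : ℝ) : Matrix (Fin n) (Fin n) ℝ :=
  fun p q => (if p = q then 1 else 0) + (if (p : ℕ) = k + 1 ∧ (q : ℕ) = k then a else 0)

/-- `T_i(u) = ℓ₁(u_1^i)·ℓ₂(u_2^{i+1})⋯ℓ_{n−i}(u_{n−i}^{n−1})`. -/
def Tmat (n : ℕ) (u : ℕ → ℕ → ℝ) (i : ℕ) : Matrix (Fin n) (Fin n) ℝ :=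
  ((List.range (n - i)).map (fun j => elemL n j (u (j + 1) (i + j)))).prod

/-- Upper bidiagonal matrices with ones on the superdiagonal. -/
def IsUpperBidiagOne {n : ℕ} (M : Matrix (Fin n) (Fin n) ℝ) : Prop :=
  (∀ p q : Fin n, (p : ℕ) + 1 = (q : ℕ) → M p q = 1) ∧
  (∀ p q : Fin n, (p : ℕ) ≠ (q : ℕ) → (p : ℕ) + 1 ≠ (q : ℕ) → M p q = 0)

/-- `π₋(M)`: the strictly lower triangular part of `M`. -/
def lowerPart {n : ℕ} (M : Matrix (Fin n) (Fin n) ℝ) : Matrix (Fin n) (Fin n) ℝ :=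
  fun i j => if (j : ℕ) < (i : ℕ) then M i j else 0

/-- `π₊(M)`: the upper triangular part of `M` including the diagonal. -/
def upperPart {n : ℕ} (M : Matrix (Fin n) (Fin n) ℝ) : Matrix (Fin n) (Fin n) ℝ :=
  fun i j => if (i : ℕ) ≤ (j : ℕ) then M i j else 0

/-- The `k`-th (0-indexed) diagonal entry of an `n×n` matrix (junk value `0` for `k ≥ n`). -/
def diagEntry {n : ℕ} (M : Matrix (Fin n) (Fin n) ℝ) (k : ℕ) : ℝ :=
  if h : k < n then M ⟨k, h⟩ ⟨k, h⟩ else 0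

/-! ### Subdiagonal matrices and the shape of `T_j` -/

/-- The matrix supported on the first subdiagonal whose entry in (0-indexed) row `p`
and column `p - 1` is `a p`; equivalently `a i` is the 1-indexed entry `(i + 1, i)`. -/
def lowB (n : ℕ) (a : ℕ → ℝ) : Matrix (Fin n) (Fin n) ℝ :=
  fun p q => if (p : ℕ) = (q : ℕ) + 1 then a p else 0

/-- The factors of `T` occur in increasing order, so no product of two distinct off-diagonal
parts survives. -/
lemma prod_elemL (n : ℕ) (w : ℕ → ℝ) (m : ℕ) :
    ((List.range m).map (fun j => elemL n j (w (j + 1)))).prod =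
      1 + lowB n (fun p => if p ≤ m then w p else 0) := by
  induction m with
  | zero =>
    ext p q
    simp only [List.range_zero, List.map_nil, List.prod_nil, Matrix.add_apply, lowB]
    grind
  | succ m ih =>
    have hE : elemL n m (w (m + 1)) =
        1 + lowB n (fun p => if p = m + 1 then w p else 0) := by
      ext p q
      simp only [elemL, Matrix.add_apply, Matrix.one_apply, lowB]
      grind
    have hzero : lowB n (fun p => if p ≤ m then w p else 0) *
        lowB n (fun p => if p = m + 1 then w p else 0) = 0 := by
      ext p q
      rw [Matrix.mul_apply]
      apply Finset.sum_eq_zero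
      intro k _
      simp only [lowB]
      grind
    have hadd : lowB n (fun p => if p ≤ m + 1 then w p else 0) =
        lowB n (fun p => if p ≤ m then w p else 0) +
          lowB n (fun p => if p = m + 1 then w p else 0) := by
      ext p q
      simp only [lowB, Matrix.add_apply]
      grind
    rw [List.range_succ, List.map_append, List.prod_append, ih]
    simp only [List.map_cons, List.map_nil, List.prod_cons, List.prod_nil, mul_one]
    rw [hE, hadd, mul_add, mul_one, add_mul, one_mul, hzero, add_zero]
    abel

lemma Tmat_eq (n : ℕ) (u : ℕ → ℕ → ℝ)
    (hu : ∀ i j, ¬(1 ≤ i ∧ i ≤ j ∧ j ≤ n - 1) → u i j = 0) (j : ℕ) (hj : 1 ≤ j) :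
    Tmat n u j = 1 + lowB n (fun i => u i (j + i - 1)) := by
  have h := prod_elemL n (fun i => u i (j + i - 1)) (n - j)
  have h1 : Tmat n u j =
      ((List.range (n - j)).map (fun k => elemL n k (u (k + 1) (j + (k + 1) - 1)))).prod := by
    unfold Tmat
    rfl
  rw [h1, h]
  congr 1
  ext p q
  simp only [lowB]
  have := hu p (j + p - 1)
  grind

/-! ### The commutators with `ε` and the flow -/

/-- The vanishing of `a 0` and `a n` removes the boundary corrections at the two ends of the
diagonal. -/
lemma comm_eps_lowB (n : ℕ) (a : ℕ → ℝ) (h0 : a 0 = 0) (hn : a n = 0) :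
    epsMat n * lowB n a - lowB n a * epsMat n =
      Matrix.diagonal (fun p : Fin n => a (p + 1) - a p) := by
  have h1 : epsMat n * lowB n a = Matrix.diagonal (fun p : Fin n => a (p + 1)) := by
    ext p q
    rw [Matrix.mul_apply, Matrix.diagonal_apply]
    by_cases hp : (p : ℕ) + 1 < n
    · rw [Finset.sum_eq_single ⟨p + 1, hp⟩]
      · simp only [epsMat, lowB]
        grind
      · intro k _ hk
        simp only [epsMat]
        grind
      · simp
    · rw [Finset.sum_eq_zero]
      · have : (p : ℕ) + 1 = n := by omega
        simp [this, hn]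
      · intro k _
        simp only [epsMat]
        grind
  have h2 : lowB n a * epsMat n = Matrix.diagonal (fun p : Fin n => a p) := by
    ext p q
    rw [Matrix.mul_apply, Matrix.diagonal_apply]
    by_cases hp : (p : ℕ) = 0
    · rw [Finset.sum_eq_zero]
      · simp [hp, h0]
      · intro k _
        simp only [lowB]
        grind
    · rw [Finset.sum_eq_single ⟨p - 1, by omega⟩]
      · simp only [epsMat, lowB]
        grind
      · intro k _ hk
        simp only [lowB]
        grind
      · simp
  rw [h1, h2, Matrix.diagonal_sub]

lemma bidiag_eq {n : ℕ} {M : Matrix (Fin n) (Fin n) ℝ} (h : IsUpperBidiagOne M) :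
    M = epsMat n + Matrix.diagonal (fun p : Fin n => diagEntry M p) := by
  ext p q
  obtain ⟨h1, h2⟩ := h
  have h1' := h1 p q
  have h2' := h2 p q
  simp only [Matrix.add_apply, Matrix.diagonal_apply, epsMat, diagEntry]
  grind

/-- The commutator `[T, T ε - R]` is supported on the first subdiagonal, with the right-hand sides
of the coordinate equations as entries. -/
lemma flow_eq (n : ℕ) (a d : ℕ → ℝ) (h0 : a 0 = 0) (hn : a n = 0) :
    (1 + lowB n a) * ((1 + lowB n a) * epsMat n -
        (epsMat n + Matrix.diagonal (fun p : Fin n => d p))) -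
      ((1 + lowB n a) * epsMat n -
        (epsMat n + Matrix.diagonal (fun p : Fin n => d p))) * (1 + lowB n a) =
      lowB n (fun i => a i * (d i - d (i - 1) + a (i - 1) - a i)) := by
  have hc := comm_eps_lowB n a h0 hn
  set D := Matrix.diagonal (fun p : Fin n => d p) with hD
  have key : (1 + lowB n a) * ((1 + lowB n a) * epsMat n - (epsMat n + D)) -
      ((1 + lowB n a) * epsMat n - (epsMat n + D)) * (1 + lowB n a) =
      D * lowB n a - lowB n a * D -
        lowB n a * (epsMat n * lowB n a - lowB n a * epsMat n) := by
    noncomm_ring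
  rw [key, hc, hD]
  ext p q
  simp only [Matrix.sub_apply, Matrix.diagonal_mul, Matrix.mul_diagonal, lowB]
  split_ifs with h
  · have : (p : ℕ) - 1 = q := by omega
    rw [this, h]
    ring
  · ring

/-! ### Triangular splitting of `T⁻¹ R T` -/

lemma lowB_mul_apply (n : ℕ) (a : ℕ → ℝ) (X : Matrix (Fin n) (Fin n) ℝ) (p q : Fin n) :
    (lowB n a * X) p q = if h : 1 ≤ (p : ℕ) then a p * X ⟨p - 1, by omega⟩ q else 0 := by
  rw [Matrix.mul_apply]
  split_ifs with h
  · rw [Finset.sum_eq_single ⟨p - 1, by omega⟩]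
    · simp only [lowB]
      grind
    · intro k _ hk
      simp only [lowB]
      grind
    · simp
  · apply Finset.sum_eq_zero
    intro k _
    simp only [lowB]
    grind

lemma isUnit_det_one_add_lowB (n : ℕ) (a : ℕ → ℝ) : IsUnit (1 + lowB n a).det := by
  rw [Matrix.det_of_isLowerTriangular]
  · simp [lowB]
  · intro p q hpq
    have hpq' : (p : ℕ) < q := hpq
    simp only [Matrix.add_apply, Matrix.one_apply, lowB]
    grind

/-- `(1 + A)⁻¹ G` is strictly lower triangular for strictly lower triangular `G`: the equation
`X = G - A X` determines `X` row by row. -/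
lemma inv_mul_strictLower (n : ℕ) (a g : ℕ → ℝ) (p q : Fin n) (hpq : (p : ℕ) ≤ q) :
    ((1 + lowB n a)⁻¹ * lowB n g) p q = 0 := by
  have hX : (1 + lowB n a) * ((1 + lowB n a)⁻¹ * lowB n g) = lowB n g :=
    Matrix.mul_nonsing_inv_cancel_left _ _ (isUnit_det_one_add_lowB n a)
  generalize (1 + lowB n a)⁻¹ * lowB n g = X at hX ⊢
  have hrow : ∀ p q : Fin n, X p q + (lowB n a * X) p q = lowB n g p q := by
    intro p q
    rw [← hX, add_mul, one_mul, Matrix.add_apply]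
  have main : ∀ m : ℕ, ∀ p q : Fin n, (p : ℕ) = m → (p : ℕ) ≤ q → X p q = 0 := by
    intro m
    induction m with
    | zero =>
      intro p q hp hpq
      have := hrow p q
      rw [lowB_mul_apply] at this
      simp only [lowB] at this
      grind
    | succ m ih =>
      intro p q hp hpq
      have := hrow p q
      rw [lowB_mul_apply, dif_pos (by omega), ih ⟨p - 1, by omega⟩ q (by simp; omega)
        (by simp; omega)] at this
      simp only [lowB] at this
      grind
  exact main p p q rfl hpq

/-- The splitting `T⁻¹ R T = T⁻¹ [T, T ε - R] + (R + [ε, T])` is the decomposition of `T⁻¹ R T`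
into its strictly lower and its upper triangular part. -/
lemma conj_parts (n : ℕ) (a : ℕ → ℝ) (h0 : a 0 = 0) (hn : a n = 0)
    (T R : Matrix (Fin n) (Fin n) ℝ) (hT : T = 1 + lowB n a) (hR : IsUpperBidiagOne R) :
    T * lowerPart (T⁻¹ * R * T) = T * (T * epsMat n - R) - (T * epsMat n - R) * T ∧
      upperPart (T⁻¹ * R * T) = R + (epsMat n * T - T * epsMat n) := by
  have hdet : IsUnit T.det := hT ▸ isUnit_det_one_add_lowB n a
  have hF : T * (T * epsMat n - R) - (T * epsMat n - R) * T =
      lowB n (fun i => a i * (diagEntry R i - diagEntry R (i - 1) + a (i - 1) - a i)) := by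
    rw [← flow_eq n a (diagEntry R) h0 hn, ← bidiag_eq hR, hT]
  have hΔ : epsMat n * T - T * epsMat n =
      Matrix.diagonal (fun p : Fin n => a (p + 1) - a p) := by
    rw [← comm_eps_lowB n a h0 hn, hT]
    noncomm_ring
  have hsplit : T⁻¹ * R * T = T⁻¹ * (T * (T * epsMat n - R) - (T * epsMat n - R) * T) +
      (R + (epsMat n * T - T * epsMat n)) := by
    have e1 : T⁻¹ * (T * (T * epsMat n - R)) = T * epsMat n - R :=
      Matrix.nonsing_inv_mul_cancel_left _ _ hdet
    have e2 : T⁻¹ * (T * epsMat n * T) = epsMat n * T := by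
      rw [mul_assoc T, Matrix.nonsing_inv_mul_cancel_left _ _ hdet]
    rw [mul_sub, e1, sub_mul, mul_sub, e2, mul_assoc]
    abel
  have hlow : ∀ p q : Fin n, (p : ℕ) ≤ q →
      (T⁻¹ * (T * (T * epsMat n - R) - (T * epsMat n - R) * T)) p q = 0 := by
    intro p q hpq
    rw [hF, hT]
    exact inv_mul_strictLower n a _ p q hpq
  have hup : ∀ p q : Fin n, (q : ℕ) < p → (R + (epsMat n * T - T * epsMat n)) p q = 0 := by
    intro p q hpq
    rw [hΔ, Matrix.add_apply, hR.2 p q (by omega) (by omega), Matrix.diagonal_apply_ne]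
    · simp
    · rintro rfl
      omega
  have hl : lowerPart (T⁻¹ * R * T) =
      T⁻¹ * (T * (T * epsMat n - R) - (T * epsMat n - R) * T) := by
    ext p q
    rw [lowerPart, hsplit, Matrix.add_apply]
    split_ifs with h
    · rw [hup p q h, add_zero]
    · rw [hlow p q (by omega)]
  refine ⟨?_, ?_⟩
  · rw [hl]
    exact Matrix.mul_nonsing_inv_cancel_left _ _ hdet
  · ext p q
    rw [upperPart, hsplit, Matrix.add_apply]
    split_ifs with h
    · rw [hlow p q h, zero_add]
    · rw [hup p q (by omega)]

/-! ### Summation of the recursion, entrywise derivatives, and the equivalences -/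

/-- A recursion with increments `D j` on `1 ≤ j ≤ N` is equivalent to its summed form. -/
lemma telescope_iff {M : Type*} [AddCommGroup M] (N : ℕ) (R D : ℕ → M) (c : M) (h0 : R 0 = c) :
    (∀ j, 1 ≤ j → j ≤ N → R j = R (j - 1) + D j) ↔
      (∀ j, 1 ≤ j → j ≤ N → R j = c + ∑ i ∈ Finset.Icc 1 j, D i) := by
  constructor
  · intro h j
    induction j with
    | zero => intro h; omega
    | succ j ih =>
      intro _ hj
      rw [h (j + 1) (by omega) hj, Finset.sum_Icc_succ_top (by omega), Nat.add_sub_cancel]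
      rcases Nat.eq_zero_or_pos j with rfl | hpos
      · simp [h0]
      · rw [ih hpos (by omega), add_assoc]
  · intro h j hj1 hj
    obtain ⟨k, rfl⟩ : ∃ k, j = k + 1 := ⟨j - 1, by omega⟩
    rw [h (k + 1) hj1 hj, Finset.sum_Icc_succ_top (by omega), Nat.add_sub_cancel]
    rcases Nat.eq_zero_or_pos k with rfl | hpos
    · simp [h0]
    · rw [h k hpos (by omega), add_assoc]

/-- Entrywise differentiation of `1 + lowB n a` amounts to differentiation of the coordinates
`a i`, `1 ≤ i ≤ m`, when the remaining ones vanish identically. -/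
lemma hasDerivAt_lowB_iff (n m : ℕ) (hm : m < n) (a : ℝ → ℕ → ℝ) (g : ℕ → ℝ) (s : ℝ)
    (ha : ∀ i, m < i → ∀ t, a t i = 0) (hg : ∀ i, m < i → g i = 0) :
    (∀ p q : Fin n, HasDerivAt (fun t => (1 + lowB n (a t)) p q) (lowB n g p q) s) ↔
      (∀ i, 1 ≤ i → i ≤ m → HasDerivAt (fun t => a t i) (g i) s) := by
  constructor
  · intro h i hi1 him
    have := h ⟨i, by omega⟩ ⟨i - 1, by omega⟩
    have e : i = i - 1 + 1 := by omega
    have e' : i ≠ i - 1 := by omega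
    simpa [lowB, Matrix.one_apply, ← e, e'] using this
  · intro h p q
    simp only [Matrix.add_apply, lowB]
    split_ifs with hpq
    · apply HasDerivAt.const_add
      by_cases hp : (p : ℕ) ≤ m
      · exact h p (by omega) hp
      · simp only [ha p (by omega), hg p (by omega)]
        exact hasDerivAt_const _ _
    · exact hasDerivAt_const _ _

/-- equivalence of the projection form (a), the commutator form (b) and
the Lusztig-coordinate form (c) of the full Kostant–Toda equations. -/
theorem statement16 (n : ℕ) (hn : 2 ≤ n) (lam : Fin n → ℝ)
    (I : Set ℝ) (hIopen : IsOpen I) (hIconv : Convex ℝ I)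
    (u : ℕ → ℕ → ℝ → ℝ)
    (hupos : ∀ i j, 1 ≤ i → i ≤ j → j ≤ n - 1 → ∀ s ∈ I, 0 < u i j s)
    (huzero : ∀ i j, ¬(1 ≤ i ∧ i ≤ j ∧ j ≤ n - 1) → ∀ s : ℝ, u i j s = 0)
    (hudiff : ∀ i j, 1 ≤ i → i ≤ j → j ≤ n - 1 → ∀ s ∈ I, DifferentiableAt ℝ (u i j) s)
    (Rs : ℕ → ℝ → Matrix (Fin n) (Fin n) ℝ)
    (hRsB : ∀ j, j ≤ n - 1 → ∀ s ∈ I, IsUpperBidiagOne (Rs j s))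
    (hRs0 : ∀ s : ℝ, Rs 0 s = epsMat n + Matrix.diagonal lam) :
    -- (a) ↔ (b)
    ((∀ j, 1 ≤ j → j ≤ n - 1 → ∀ s ∈ I,
        (∀ p q : Fin n,
          HasDerivAt (fun t => Tmat n (fun a b => u a b t) j p q)
            ((Tmat n (fun a b => u a b s) j *
              lowerPart ((Tmat n (fun a b => u a b s) j)⁻¹ * Rs (j - 1) s *
                Tmat n (fun a b => u a b s) j)) p q) s) ∧
        Rs j s = upperPart ((Tmat n (fun a b => u a b s) j)⁻¹ * Rs (j - 1) s *
          Tmat n (fun a b => u a b s) j))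
      ↔
      (∀ j, 1 ≤ j → j ≤ n - 1 → ∀ s ∈ I,
        (∀ p q : Fin n,
          HasDerivAt (fun t => Tmat n (fun a b => u a b t) j p q)
            ((Tmat n (fun a b => u a b s) j *
                (Tmat n (fun a b => u a b s) j * epsMat n - Rs (j - 1) s) -
              (Tmat n (fun a b => u a b s) j * epsMat n - Rs (j - 1) s) *
                Tmat n (fun a b => u a b s) j) p q) s) ∧
        Rs j s = (epsMat n + Matrix.diagonal lam) +
          (epsMat n * (∑ i ∈ Finset.Icc 1 j, Tmat n (fun a b => u a b s) i) -
            (∑ i ∈ Finset.Icc 1 j, Tmat n (fun a b => u a b s) i) * epsMat n))) ∧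
    -- (b) ↔ (c)
    ((∀ j, 1 ≤ j → j ≤ n - 1 → ∀ s ∈ I,
        (∀ p q : Fin n,
          HasDerivAt (fun t => Tmat n (fun a b => u a b t) j p q)
            ((Tmat n (fun a b => u a b s) j *
                (Tmat n (fun a b => u a b s) j * epsMat n - Rs (j - 1) s) -
              (Tmat n (fun a b => u a b s) j * epsMat n - Rs (j - 1) s) *
                Tmat n (fun a b => u a b s) j) p q) s) ∧
        Rs j s = (epsMat n + Matrix.diagonal lam) +
          (epsMat n * (∑ i ∈ Finset.Icc 1 j, Tmat n (fun a b => u a b s) i) -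
            (∑ i ∈ Finset.Icc 1 j, Tmat n (fun a b => u a b s) i) * epsMat n))
      ↔
      (∀ j, 1 ≤ j → j ≤ n - 1 → ∀ s ∈ I,
        (∀ i, 1 ≤ i → i ≤ n - j →
          HasDerivAt (fun t => u i (j + i - 1) t)
            (u i (j + i - 1) s *
              (diagEntry (Rs (j - 1) s) i - diagEntry (Rs (j - 1) s) (i - 1) +
                u (i - 1) (j + i - 2) s - u i (j + i - 1) s)) s) ∧
        (∀ i, 1 ≤ i → i ≤ n →
          diagEntry (Rs j s) (i - 1) = diagEntry (Rs (j - 1) s) (i - 1) +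
            u i (j + i - 1) s - u (i - 1) (j + i - 2) s))) := by
  have hz : ∀ s, ∀ i j, ¬(1 ≤ i ∧ i ≤ j ∧ j ≤ n - 1) → u i j s = 0 :=
    fun s i j h => huzero i j h s
  have hTm : ∀ j, 1 ≤ j → ∀ s, Tmat n (fun a b => u a b s) j =
      1 + lowB n (fun i => u i (j + i - 1) s) :=
    fun j hj s => Tmat_eq n (fun a b => u a b s) (hz s) j hj
  have ha0 : ∀ j s, u 0 (j + 0 - 1) s = 0 := fun j s => hz s _ _ (by omega)
  have han : ∀ j s, u n (j + n - 1) s = 0 := fun j s => hz s _ _ (by omega)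
  -- The condition on the `R^{(j)}` in the commutator form, for fixed `s`, as a recursion.
  have htel : ∀ s, (∀ j, 1 ≤ j → j ≤ n - 1 → Rs j s = (epsMat n + Matrix.diagonal lam) +
          (epsMat n * (∑ i ∈ Finset.Icc 1 j, Tmat n (fun a b => u a b s) i) -
            (∑ i ∈ Finset.Icc 1 j, Tmat n (fun a b => u a b s) i) * epsMat n)) ↔
      (∀ j, 1 ≤ j → j ≤ n - 1 → Rs j s = Rs (j - 1) s +
        (epsMat n * Tmat n (fun a b => u a b s) j -
          Tmat n (fun a b => u a b s) j * epsMat n)) := by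
    intro s
    rw [telescope_iff (n - 1) (fun j => Rs j s)
      (fun j => epsMat n * Tmat n (fun a b => u a b s) j -
          Tmat n (fun a b => u a b s) j * epsMat n) _ (hRs0 s)]
    simp only [Finset.sum_sub_distrib, Finset.mul_sum, Finset.sum_mul]
  constructor
  · have hparts := fun j (hj1 : 1 ≤ j) (hj : j ≤ n - 1) s (hs : s ∈ I) =>
      conj_parts n _ (ha0 j s) (han j s) _ _ (hTm j hj1 s) (hRsB (j - 1) (by omega) s hs)
    constructor
    · intro h j hj1 hj s hs
      refine ⟨fun p q => ?_, (htel s).2 (fun j hj1 hj => ?_) j hj1 hj⟩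
      · rw [← (hparts j hj1 hj s hs).1]
        exact (h j hj1 hj s hs).1 p q
      · rw [← (hparts j hj1 hj s hs).2]
        exact (h j hj1 hj s hs).2
    · intro h j hj1 hj s hs
      rw [(hparts j hj1 hj s hs).1, (hparts j hj1 hj s hs).2]
      exact ⟨(h j hj1 hj s hs).1,
        (htel s).1 (fun j hj1 hj => (h j hj1 hj s hs).2) j hj1 hj⟩
  · have hderiv : ∀ j, 1 ≤ j → j ≤ n - 1 → ∀ s ∈ I,
        ((∀ p q : Fin n,
          HasDerivAt (fun t => Tmat n (fun a b => u a b t) j p q)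
            ((Tmat n (fun a b => u a b s) j *
                (Tmat n (fun a b => u a b s) j * epsMat n - Rs (j - 1) s) -
              (Tmat n (fun a b => u a b s) j * epsMat n - Rs (j - 1) s) *
                Tmat n (fun a b => u a b s) j) p q) s) ↔
        (∀ i, 1 ≤ i → i ≤ n - j →
          HasDerivAt (fun t => u i (j + i - 1) t)
            (u i (j + i - 1) s *
              (diagEntry (Rs (j - 1) s) i - diagEntry (Rs (j - 1) s) (i - 1) +
                u (i - 1) (j + i - 2) s - u i (j + i - 1) s)) s)) := by
      intro j hj1 hj s hs
      have hvan : ∀ i, n - j < i → ∀ t, u i (j + i - 1) t = 0 :=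
        fun i hi t => hz t _ _ (by omega)
      have hF := flow_eq n (fun i => u i (j + i - 1) s) (diagEntry (Rs (j - 1) s))
        (ha0 j s) (han j s)
      rw [← bidiag_eq (hRsB (j - 1) (by omega) s hs)] at hF
      simp only [hTm j hj1]
      rw [hF, hasDerivAt_lowB_iff n (n - j) (by omega) (fun t i => u i (j + i - 1) t) _ s hvan
        (fun i hi => by rw [hvan i hi s, zero_mul])]
      refine forall_congr' fun i => forall_congr' fun hi => forall_congr' fun _ => ?_
      have e : j + (i - 1) - 1 = j + i - 2 := by omega
      rw [e]
    have hdiag : ∀ j, 1 ≤ j → j ≤ n - 1 → ∀ s ∈ I,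
        (Rs j s = Rs (j - 1) s + (epsMat n * Tmat n (fun a b => u a b s) j -
          Tmat n (fun a b => u a b s) j * epsMat n) ↔
        (∀ i, 1 ≤ i → i ≤ n →
          diagEntry (Rs j s) (i - 1) = diagEntry (Rs (j - 1) s) (i - 1) +
            u i (j + i - 1) s - u (i - 1) (j + i - 2) s)) := by
      intro j hj1 hj s hs
      have hΔ : epsMat n * Tmat n (fun a b => u a b s) j -
          Tmat n (fun a b => u a b s) j * epsMat n =
          Matrix.diagonal (fun p : Fin n => u (p + 1) (j + (p + 1) - 1) s - u p (j + p - 1) s) := by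
        rw [← comm_eps_lowB n (fun i => u i (j + i - 1) s) (ha0 j s) (han j s), hTm j hj1 s]
        noncomm_ring
      rw [hΔ]
      constructor
      · intro h i hi1 hi
        have e : j + (i - 1) - 1 = j + i - 2 := by omega
        have e' : i - 1 + 1 = i := by omega
        have hlt : i - 1 < n := by omega
        rw [h]
        simp only [diagEntry, dif_pos hlt, Matrix.add_apply, Matrix.diagonal_apply_eq, e, e']
        ring
      · intro h
        rw [bidiag_eq (hRsB j hj s hs)]
        conv_rhs => rw [bidiag_eq (hRsB (j - 1) (by omega) s hs)]
        rw [add_assoc, Matrix.diagonal_add]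
        congr 2
        funext p
        have := h (p + 1) (by omega) (by omega)
        have e : j + (p + 1) - 2 = j + (p : ℕ) - 1 := by omega
        rw [Nat.add_sub_cancel, e] at this
        rw [this]
        ring
    constructor
    · intro h j hj1 hj s hs
      exact ⟨(hderiv j hj1 hj s hs).1 (h j hj1 hj s hs).1, (hdiag j hj1 hj s hs).1
        ((htel s).1 (fun j hj1 hj => (h j hj1 hj s hs).2) j hj1 hj)⟩
    · intro h j hj1 hj s hs
      exact ⟨(hderiv j hj1 hj s hs).2 (h j hj1 hj s hs).1, (htel s).2
        (fun j hj1 hj => (hdiag j hj1 hj s hs).2 (h j hj1 hj s hs).2) j hj1 hj⟩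
end

section
/- Let n ≥ 2, λ₁,…,λ_n ∈ ℝ, and let I ⊆ ℝ be an open interval. Let u_i^j : I → ℝ_{>0} (1 ≤ i ≤ j ≤ n−1) be differentiable, extended by u_i^j := 0 whenever the indices do not satisfy 1 ≤ i ≤ j ≤ n−1, and let R^{(0)}, …, R^{(n−1)} be upper bidiagonal matrices with ones on the superdiagonal depending on s with R^{(0)} ≡ ε_Λ = ε + diag(λ₁,…,λ_n), satisfying for all 1 ≤ j ≤ n−1 the coordinate equations: (d/ds u_i^{j+i−1})/u_i^{j+i−1} = R^{(j−1)}_{i+1,i+1} − R^{(j−1)}_{i,i} + u_{i−1}^{j+i−2} − u_i^{j+i−1} for 1 ≤ i ≤ n−j, and R^{(j)}_{i,i} = R^{(j−1)}_{i,i} + u_i^{j+i−1} − u_{i−1}^{j+i−2} for 1 ≤ i ≤ n. Suppose differentiable functions x_i^m : I → ℝ (1 ≤ i ≤ m ≤ n) satisfy u_i^j = exp(x_{i+1}^{j+1} − x_i^j) for 1 ≤ i ≤ j ≤ n−1. Then for each h ∈ {0,…,n−2} the quantity (d/ds x_i^{i+h}) − λ_i + u_{i−1}^{i−1} − Σ_{l=1}^{h}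 (u_i^{i+h−l} − u_{i−1}^{i+h−l}) is independent of i for 1 ≤ i ≤ n−1−h; equivalently, there exists a function C_h : I → ℝ such that d/ds x_i^{i+h} = C_h + λ_i − u_{i−1}^{i−1} + Σ_{l=1}^{h} (u_i^{i+h−l} − u_{i−1}^{i+h−l}) for all 1 ≤ i ≤ n−1−h. -/
/-!
Fix `s ∈ I` and write `Q_i^h = λ_i − u_{i−1}^{i−1} + ∑_{l=1}^h (u_i^{i+h−l} − u_{i−1}^{i+h−l})`.
Iterating the recursion for the diagonal of `R^{(j)}` from `R^{(0)} = ε_Λ` gives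
`R^{(h)}_{i,i} = λ_i + ∑_{k=1}^h (u_i^{k+i−1} − u_{i−1}^{k+i−2})`; the second sum is a shift of the
one in `Q_i^h`, so `Q_i^h = R^{(h)}_{i,i} − u_{i−1}^{i+h−1}` (`rhs_eq_diagEntry`).

On the other hand `u_i^{i+h} = exp (x_{i+1}^{i+1+h} − x_i^{i+h})`, so the logarithmic derivative of
`u_i^{i+h}` is `ẋ_{i+1}^{i+1+h} − ẋ_i^{i+h}` (`logDeriv_exp_coord`), and the equation of motion with
`j = h + 1` says that this equals `Q_{i+1}^h − Q_i^h`. Hence `ẋ_i^{i+h} − Q_i^h` does not depend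
on `i`.
-/

open Matrix

/-- Reversal of the order of summation: the exponents `i + h - l` run down from `i + h - 1`
to `i`. -/
lemma sum_Icc_reflect (f : ℕ → ℝ) (i h : ℕ) :
    ∑ l ∈ Finset.Icc 1 h, f (i + h - l) = ∑ k ∈ Finset.range h, f (i + k) := by
  refine Finset.sum_nbij' (fun l => h - l) (fun k => h - k) ?_ ?_ ?_ ?_ ?_
  all_goals intro a ha
  all_goals simp only [Finset.mem_Icc, Finset.mem_range] at ha ⊢
  all_goals try omega
  congr 1
  omega

/-- Solution of the recursion for one diagonal position. Here `a = u_i`, `b = u_{i-1}` and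
`d j = R^{(j)}_{i,i}`, with `i = p + 1`. -/
lemma rhs_eq_diagEntry (N p : ℕ) (c : ℝ) (a b d : ℕ → ℝ) (h0 : d 0 = c)
    (hd : ∀ j, j + 1 ≤ N → d (j + 1) = d j + a (p + 1 + j) - b (p + j)) (h : ℕ) (hh : h ≤ N) :
    c - b p + ∑ l ∈ Finset.Icc 1 h, (a (p + 1 + h - l) - b (p + 1 + h - l)) =
      d h - b (p + h) := by
  rw [sum_Icc_reflect (fun m => a m - b m)]
  induction h with
  | zero => simp [h0]
  | succ h ih =>
    rw [Finset.sum_range_succ, hd h hh]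
    have hb : p + (h + 1) = p + 1 + h := by omega
    rw [hb]
    linarith [ih (by omega)]

/-- If `v = exp (y - x)` on an open set and `v` has derivative `v * r`, then `y' - x' = r`. -/
lemma logDeriv_exp_coord {I : Set ℝ} (hI : IsOpen I) {v x y : ℝ → ℝ} {r x' y' s : ℝ} (hs : s ∈ I)
    (hv : ∀ t ∈ I, v t = Real.exp (y t - x t)) (hdv : HasDerivAt v (v s * r) s)
    (hx : HasDerivAt x x' s) (hy : HasDerivAt y y' s) : y' - x' = r := by
  have hexp : HasDerivAt v (Real.exp (y s - x s) * (y' - x')) s :=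
    (hy.sub hx).exp.congr_of_eventuallyEq (Filter.eventuallyEq_of_mem (hI.mem_nhds hs) hv)
  have heq := hexp.unique hdv
  rw [hv s hs] at heq
  exact mul_left_cancel₀ (Real.exp_ne_zero _) heq

/-- for the full Kostant–Toda equations in Lusztig coordinates written as
`u_i^j = exp(x_{i+1}^{j+1} − x_i^j)`, the combination
`ẋ_i^{i+h} − λ_i + u_{i−1}^{i−1} − Σ_{l=1}^h (u_i^{i+h−l} − u_{i−1}^{i+h−l})`
is independent of `i`, i.e. there exist functions `C_h` with
`ẋ_i^{i+h} = C_h + λ_i − u_{i−1}^{i−1} + Σ_{l=1}^h (u_i^{i+h−l} − u_{i−1}^{i+h−l})`. -/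
theorem statement17 (n : ℕ) (hn : 2 ≤ n) (lam : ℕ → ℝ)
    (I : Set ℝ) (hIopen : IsOpen I) (hIconv : Convex ℝ I)
    (u : ℕ → ℕ → ℝ → ℝ)
    (hupos : ∀ i j, 1 ≤ i → i ≤ j → j ≤ n - 1 → ∀ s ∈ I, 0 < u i j s)
    (huzero : ∀ i j, ¬(1 ≤ i ∧ i ≤ j ∧ j ≤ n - 1) → ∀ s : ℝ, u i j s = 0)
    (Rs : ℕ → ℝ → Matrix (Fin n) (Fin n) ℝ)
    (hRsB : ∀ j, j ≤ n - 1 → ∀ s ∈ I, IsUpperBidiagOne (Rs j s))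
    (hRs0 : ∀ s : ℝ, Rs 0 s = epsMat n +
      Matrix.diagonal (fun k : Fin n => lam ((k : ℕ) + 1)))
    -- the coordinate form of the full Kostant–Toda equations:
    (hODE : ∀ j, 1 ≤ j → j ≤ n - 1 → ∀ s ∈ I, ∀ i, 1 ≤ i → i ≤ n - j →
      HasDerivAt (fun t => u i (j + i - 1) t)
        (u i (j + i - 1) s *
          (diagEntry (Rs (j - 1) s) i - diagEntry (Rs (j - 1) s) (i - 1) +
            u (i - 1) (j + i - 2) s - u i (j + i - 1) s)) s)
    (hRdiag : ∀ j, 1 ≤ j → j ≤ n - 1 → ∀ s ∈ I, ∀ i, 1 ≤ i → i ≤ n →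
      diagEntry (Rs j s) (i - 1) = diagEntry (Rs (j - 1) s) (i - 1) +
        u i (j + i - 1) s - u (i - 1) (j + i - 2) s)
    -- the coordinates `x_i^m` and their derivatives
    (x x' : ℕ → ℕ → ℝ → ℝ)
    (hx' : ∀ i m, 1 ≤ i → i ≤ m → m ≤ n → ∀ s ∈ I, HasDerivAt (x i m) (x' i m s) s)
    (hux : ∀ i j, 1 ≤ i → i ≤ j → j ≤ n - 1 → ∀ s ∈ I,
      u i j s = Real.exp (x (i + 1) (j + 1) s - x i j s)) :
    -- independence of `i`
    (∀ h, h ≤ n - 2 → ∀ s ∈ I, ∀ i i', 1 ≤ i → i ≤ n - 1 - h → 1 ≤ i' → i' ≤ n - 1 - h →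
      x' i (i + h) s - lam i + u (i - 1) (i - 1) s -
          ∑ l ∈ Finset.Icc 1 h, (u i (i + h - l) s - u (i - 1) (i + h - l) s) =
        x' i' (i' + h) s - lam i' + u (i' - 1) (i' - 1) s -
          ∑ l ∈ Finset.Icc 1 h, (u i' (i' + h - l) s - u (i' - 1) (i' + h - l) s)) ∧
    -- equivalently, existence of the functions `C_h`
    (∃ C : ℕ → ℝ → ℝ, ∀ h, h ≤ n - 2 → ∀ s ∈ I, ∀ i, 1 ≤ i → i ≤ n - 1 - h →
      x' i (i + h) s = C h s + lam i - u (i - 1) (i - 1) s +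
        ∑ l ∈ Finset.Icc 1 h, (u i (i + h - l) s - u (i - 1) (i + h - l) s)) := by
  -- It suffices to compare every index with `i = 1`.
  have key : ∀ h, h ≤ n - 2 → ∀ s ∈ I, ∀ p, p + 1 ≤ n - 1 - h →
      x' (p + 1) (p + 1 + h) s - lam (p + 1) + u p p s -
          ∑ l ∈ Finset.Icc 1 h, (u (p + 1) (p + 1 + h - l) s - u p (p + 1 + h - l) s) =
        x' 1 (1 + h) s - lam 1 + u 0 0 s -
          ∑ l ∈ Finset.Icc 1 h, (u 1 (1 + h - l) s - u 0 (1 + h - l) s) := by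
    intro h hh s hs p
    have hQ : ∀ p, p + 1 ≤ n →
        lam (p + 1) - u p p s +
            ∑ l ∈ Finset.Icc 1 h, (u (p + 1) (p + 1 + h - l) s - u p (p + 1 + h - l) s) =
          diagEntry (Rs h s) p - u p (p + h) s := by
      intro p hp
      refine rhs_eq_diagEntry (n - 1) p (lam (p + 1)) (fun m => u (p + 1) m s) (fun m => u p m s)
        (fun j => diagEntry (Rs j s) p) ?_ ?_ h (by omega)
      · have hp' : p < n := hp
        simp [diagEntry, hp', hRs0, epsMat]
      · intro j hj
        have hR := hRdiag (j + 1) (by omega) hj s hs (p + 1) (by omega) hp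
        have e1 : j + 1 + (p + 1) - 1 = p + 1 + j := by omega
        have e2 : j + 1 + (p + 1) - 2 = p + j := by omega
        simpa only [e1, e2, Nat.add_sub_cancel] using hR
    induction p with
    | zero => intro _; simp only [Nat.zero_add]
    | succ p ih =>
      intro hp
      rw [← ih (by omega)]
      have hO := hODE (h + 1) (by omega) (by omega) s hs (p + 1) (by omega) (by omega)
      have e1 : h + 1 + (p + 1) - 1 = p + 1 + h := by omega
      have e2 : h + 1 + (p + 1) - 2 = p + h := by omega
      have e3 : p + 1 + h + 1 = p + 1 + 1 + h := by omega
      simp only [e1, e2, Nat.add_sub_cancel] at hO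
      have hL := logDeriv_exp_coord hIopen hs
        (hux (p + 1) (p + 1 + h) (by omega) (by omega) (by omega)) hO
        (hx' (p + 1) (p + 1 + h) (by omega) (by omega) (by omega) s hs)
        (hx' (p + 1 + 1) (p + 1 + h + 1) (by omega) (by omega) (by omega) s hs)
      rw [e3] at hL
      linarith [hQ p (by omega), hQ (p + 1) (by omega)]
  refine ⟨?_, fun h s => x' 1 (1 + h) s - lam 1 + u 0 0 s -
    ∑ l ∈ Finset.Icc 1 h, (u 1 (1 + h - l) s - u 0 (1 + h - l) s), ?_⟩
  · intro h hh s hs i i' hi hi2 hi' hi2'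
    obtain ⟨p, rfl⟩ := Nat.exists_eq_add_of_le' hi
    obtain ⟨q, rfl⟩ := Nat.exists_eq_add_of_le' hi'
    simp only [Nat.add_sub_cancel]
    exact (key h hh s hs p hi2).trans (key h hh s hs q hi2').symm
  · intro h hh s hs i hi hi2
    obtain ⟨p, rfl⟩ := Nat.exists_eq_add_of_le' hi
    simp only [Nat.add_sub_cancel]
    linarith [key h hh s hs p hi2]
end

section
/- In the setting of the full Kostant–Toda equations in Lusztig coordinates — λ₁,…,λ_n ∈ ℝ; differentiable u_i^j : I → ℝ_{>0} (1 ≤ i ≤ j ≤ n−1), extended by 0 outside this index range; upper bidiagonal matrices R^{(j)} with ones on the superdiagonal, R^{(0)} ≡ ε_Λ = ε + diag(λ₁,…,λ_n), satisfying (d/ds u_i^{j+i−1})/u_i^{j+i−1} = R^{(j−1)}_{i+1,i+1} − R^{(j−1)}_{i,i} + u_{i−1}^{j+i−2} − u_i^{j+i−1} (1 ≤ j ≤ n−1, 1 ≤ i ≤ n−j) and R^{(j)}_{i,i} = R^{(j−1)}_{i,i} + u_i^{j+i−1} − u_{i−1}^{j+i−2} (1 ≤ j ≤ n−1, 1 ≤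 i ≤ n); and differentiable x_i^m : I → ℝ (1 ≤ i ≤ m ≤ n) with u_i^j = exp(x_{i+1}^{j+1} − x_i^j) — let C_h : I → ℝ (0 ≤ h ≤ n−1) be defined by C_h := (d/ds x_1^{1+h}) − λ_1 + u_0^0 − Σ_{l=1}^{h}(u_1^{1+h−l} − u_0^{1+h−l}). Then the x's satisfy O'Connell's system: d/ds x_1^1 = C_0 + λ_1; for 2 ≤ m ≤ n: d/ds x_1^m = C_{m−1} − C_{m−2} + d/ds x_1^{m−1} + exp(x_2^m − x_1^{m−1}) and d/ds x_m^m = C_0 + λ_m − exp(x_m^m − x_{m−1}^{m−1}); and for 1 < i < m ≤ n: d/ds x_i^m = C_{m−i} − C_{m−i−1} + d/ds x_i^{m−1} + exp(x_{i+1}^m − x_i^{m−1}) − exp(x_i^m − x_{i−1}^{m−1}). -/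
/-!
Put `h = m - i`. Since `u_i^{i+h} = exp (x_{i+1}^{i+h+1} - x_i^{i+h})`, the equation for the
logarithmic derivative of `u_i^{i+h}` says exactly that
`ẋ_i^{i+h} - R^{(h)}_{i,i} + u_{i-1}^{i+h-1}` does not change when `i` is replaced by `i + 1`.
At `i = 1` its value is `C_h`, because the recursion for `R^{(h)}_{1,1}` telescopes to
`λ_1 + Σ_{j ≤ h} u_1^j`. Hence `ẋ_i^{i+h} = C_h + R^{(h)}_{i,i} - u_{i-1}^{i+h-1}`. For `h = 0`
this is the formula for `ẋ_m^m`; subtracting the instances `h` and `h - 1` and inserting the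
recursion for `R^{(h)}_{i,i}` gives the other equations.
-/

open Matrix

/-- If `v = exp (b - a)` near `s`, the logarithmic derivative of `v` at `s` is `b' - a'`. -/
lemma logDeriv_eq_of_eq_exp_sub {I : Set ℝ} (hI : IsOpen I) {s : ℝ} (hs : s ∈ I)
    {v a b : ℝ → ℝ} {a' b' r : ℝ} (hv : ∀ t ∈ I, v t = Real.exp (b t - a t))
    (hvr : HasDerivAt v (v s * r) s) (ha : HasDerivAt a a' s) (hb : HasDerivAt b b' s) :
    b' - a' = r := by
  have h1 : HasDerivAt v (Real.exp (b s - a s) * (b' - a')) s :=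
    ((hb.sub ha).exp).congr_of_eventuallyEq
      (Filter.eventually_of_mem (hI.mem_nhds hs) hv)
  have h2 := h1.unique hvr
  rw [hv s hs] at h2
  exact mul_left_cancel₀ (Real.exp_ne_zero _) h2

/-- in the setting of the full Kostant–Toda equations in Lusztig
coordinates with `u_i^j = exp(x_{i+1}^{j+1} − x_i^j)`, and with
`C_h := ẋ_1^{1+h} − λ_1 + u_0^0 − Σ_{l=1}^h (u_1^{1+h−l} − u_0^{1+h−l})`, the `x`'s
satisfy O'Connell's system of ODEs. -/
theorem statement18 (n : ℕ) (hn : 2 ≤ n) (lam : ℕ → ℝ)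
    (I : Set ℝ) (hIopen : IsOpen I) (hIconv : Convex ℝ I)
    (u : ℕ → ℕ → ℝ → ℝ)
    (hupos : ∀ i j, 1 ≤ i → i ≤ j → j ≤ n - 1 → ∀ s ∈ I, 0 < u i j s)
    (huzero : ∀ i j, ¬(1 ≤ i ∧ i ≤ j ∧ j ≤ n - 1) → ∀ s : ℝ, u i j s = 0)
    (Rs : ℕ → ℝ → Matrix (Fin n) (Fin n) ℝ)
    (hRsB : ∀ j, j ≤ n - 1 → ∀ s ∈ I, IsUpperBidiagOne (Rs j s))
    (hRs0 : ∀ s : ℝ, Rs 0 s = epsMat n +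
      Matrix.diagonal (fun k : Fin n => lam ((k : ℕ) + 1)))
    -- the coordinate form of the full Kostant–Toda equations:
    (hODE : ∀ j, 1 ≤ j → j ≤ n - 1 → ∀ s ∈ I, ∀ i, 1 ≤ i → i ≤ n - j →
      HasDerivAt (fun t => u i (j + i - 1) t)
        (u i (j + i - 1) s *
          (diagEntry (Rs (j - 1) s) i - diagEntry (Rs (j - 1) s) (i - 1) +
            u (i - 1) (j + i - 2) s - u i (j + i - 1) s)) s)
    (hRdiag : ∀ j, 1 ≤ j → j ≤ n - 1 → ∀ s ∈ I, ∀ i, 1 ≤ i → i ≤ n →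
      diagEntry (Rs j s) (i - 1) = diagEntry (Rs (j - 1) s) (i - 1) +
        u i (j + i - 1) s - u (i - 1) (j + i - 2) s)
    -- the coordinates `x_i^m` and their derivatives
    (x x' : ℕ → ℕ → ℝ → ℝ)
    (hx' : ∀ i m, 1 ≤ i → i ≤ m → m ≤ n → ∀ s ∈ I, HasDerivAt (x i m) (x' i m s) s)
    (hux : ∀ i j, 1 ≤ i → i ≤ j → j ≤ n - 1 → ∀ s ∈ I,
      u i j s = Real.exp (x (i + 1) (j + 1) s - x i j s))
    -- the functions `C_h`, `0 ≤ h ≤ n−1`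
    (C : ℕ → ℝ → ℝ)
    (hC : ∀ h, h ≤ n - 1 → ∀ s : ℝ,
      C h s = x' 1 (1 + h) s - lam 1 + u 0 0 s -
        ∑ l ∈ Finset.Icc 1 h, (u 1 (1 + h - l) s - u 0 (1 + h - l) s)) :
    -- O'Connell's equations
    (∀ s ∈ I, x' 1 1 s = C 0 s + lam 1) ∧
    (∀ m, 2 ≤ m → m ≤ n → ∀ s ∈ I,
      x' 1 m s = C (m - 1) s - C (m - 2) s + x' 1 (m - 1) s +
        Real.exp (x 2 m s - x 1 (m - 1) s) ∧
      x' m m s = C 0 s + lam m - Real.exp (x m m s - x (m - 1) (m - 1) s)) ∧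
    (∀ i m, 1 < i → i < m → m ≤ n → ∀ s ∈ I,
      x' i m s = C (m - i) s - C (m - i - 1) s + x' i (m - 1) s +
        Real.exp (x (i + 1) m s - x i (m - 1) s) -
        Real.exp (x i m s - x (i - 1) (m - 1) s)) := by
  have hR0 : ∀ s i, i + 1 ≤ n → diagEntry (Rs 0 s) i = lam (i + 1) := by
    intro s i hi
    have hi' : i < n := hi
    simp [diagEntry, hi', hRs0, epsMat]
  have hR1 : ∀ s ∈ I, ∀ h, h ≤ n - 1 →
      diagEntry (Rs h s) 0 = lam 1 + ∑ l ∈ Finset.range h, u 1 (l + 1) s := by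
    intro s hs h
    induction h with
    | zero => intro _; simpa using hR0 s 0 (by omega)
    | succ h ih =>
      intro hh
      have h1 := hRdiag (h + 1) (by omega) hh s hs 1 le_rfl (by omega)
      have h0 := huzero 0 (h + 1 + 1 - 2) (by omega) s
      simp only [Nat.sub_self, Nat.add_sub_cancel] at h1
      rw [h1, ih (by omega), Finset.sum_range_succ, h0]
      ring
  have hC' : ∀ s ∈ I, ∀ h, h ≤ n - 1 → C h s = x' 1 (1 + h) s - diagEntry (Rs h s) 0 := by
    intro s hs h hh
    have hsum : ∑ l ∈ Finset.Icc 1 h, (u 1 (1 + h - l) s - u 0 (1 + h - l) s)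
        = ∑ l ∈ Finset.range h, u 1 (l + 1) s := by
      rw [← Finset.sum_range_reflect, ← Finset.Ico_add_one_right_eq_Icc,
        Finset.sum_Ico_eq_sum_range]
      refine Finset.sum_congr (by simp) fun l hl => ?_
      have hl' := Finset.mem_range.1 hl
      rw [huzero 0 _ (by omega), sub_zero]
      congr 1
      omega
    rw [hC h hh s, hR1 s hs h hh, hsum, huzero 0 0 (by omega)]
    ring
  -- `i` is 0-indexed here: this is the formula for `ẋ_{i+1}^{i+1+h}`.
  have key : ∀ s ∈ I, ∀ h i, i + 1 + h ≤ n →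
      x' (i + 1) (i + 1 + h) s = C h s + diagEntry (Rs h s) i - u i (i + h) s := by
    intro s hs h i
    induction i with
    | zero =>
      intro hi
      rw [hC' s hs h (by omega), huzero 0 _ (by omega)]
      simp only [Nat.zero_add]
      ring
    | succ i ih =>
      intro hi
      have ih := ih (by omega)
      have hode := hODE (h + 1) (by omega) (by omega) s hs (i + 1) (by omega) (by omega)
      have e1 : h + 1 + (i + 1) - 1 = i + 1 + h := by omega
      have e2 : h + 1 + (i + 1) - 2 = i + h := by omega
      have e3 : i + 1 + 1 + h = i + 1 + h + 1 := by omega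
      rw [e1, e2] at hode
      simp only [Nat.add_sub_cancel] at hode
      rw [e3] at hi ⊢
      have hlog := logDeriv_eq_of_eq_exp_sub hIopen hs
        (hux (i + 1) (i + 1 + h) (by omega) (by omega) (by omega)) hode
        (hx' (i + 1) (i + 1 + h) (by omega) (by omega) (by omega) s hs)
        (hx' (i + 1 + 1) (i + 1 + h + 1) (by omega) (by omega) (by omega) s hs)
      linarith
  have step : ∀ s ∈ I, ∀ h i, i + 1 + h + 1 ≤ n →
      x' (i + 1) (i + 1 + h + 1) s = C (h + 1) s - C h s + x' (i + 1) (i + 1 + h) s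
        + Real.exp (x (i + 2) (i + 1 + h + 1) s - x (i + 1) (i + 1 + h) s)
        - u i (i + 1 + h) s := by
    intro s hs h i hi
    have k1 := key s hs (h + 1) i (by omega)
    have k0 := key s hs h i (by omega)
    have hr := hRdiag (h + 1) (by omega) (by omega) s hs (i + 1) (by omega) (by omega)
    have e1 : h + 1 + (i + 1) - 1 = i + 1 + h := by omega
    have e2 : h + 1 + (i + 1) - 2 = i + h := by omega
    have e3 : i + (h + 1) = i + 1 + h := by omega
    rw [e1, e2] at hr
    simp only [Nat.add_sub_cancel] at hr
    rw [e3, ← Nat.add_assoc] at k1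
    have hu := hux (i + 1) (i + 1 + h) (by omega) (by omega) (by omega) s hs
    linarith
  refine ⟨fun s hs => ?_, fun m hm hmn s hs => ⟨?_, ?_⟩, fun i m hi him hmn s hs => ?_⟩
  · rw [hC' s hs 0 (by omega), hR0 s 0 (by omega)]
    simp
  · obtain ⟨h, rfl⟩ := Nat.exists_eq_add_of_le' hm
    have h1 := step s hs h 0 (by omega)
    rw [huzero 0 _ (by omega), sub_zero] at h1
    have e : 0 + 1 + h = h + 1 := by omega
    rw [e] at h1
    exact h1
  · obtain ⟨k, rfl⟩ := Nat.exists_eq_add_of_le' hm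
    have h1 := key s hs 0 (k + 1) (by omega)
    rw [hR0 s (k + 1) (by omega)] at h1
    have hu := hux (k + 1) (k + 1) (by omega) le_rfl (by omega) s hs
    simp only [Nat.add_zero] at h1
    rw [hu] at h1
    exact h1
  · obtain ⟨k, rfl⟩ := Nat.exists_eq_add_of_le' hi
    obtain ⟨h, rfl⟩ := Nat.exists_eq_add_of_le him
    have h1 := step s hs h (k + 1) (by omega)
    have hu := hux (k + 1) (k + 1 + 1 + h) (by omega) (by omega) (by omega) s hs
    rw [hu] at h1
    have e1 : k + (1 + 1) + 1 + h = k + 1 + 1 + h + 1 := by omega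
    have e2 : k + 1 + 1 + h + 1 - (k + (1 + 1)) = h + 1 := by omega
    simp only [Nat.succ_eq_add_one] at *
    rw [e1, e2]
    exact h1
end
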